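/- Let A ∈ ℝ^{m×k} have full column rank with thin SVD A = U_A Σ_A V_Aᵀ and row leverage scores l_i(A) = ‖U_A[i,:]‖₂². Let 𝓘_D ⊆ {1,…,m} with |𝓘_D| = s_D be a set of deterministically included rows, 𝓘_R = {1,…,m} ∖ 𝓘_D, θ = Σ_{i ∈ 𝓘_D} l_i(A), and ξ = k − θ. Let S_H ∈ ℝ^{(s_D+s_R)×m} be the hybrid sampling matrix obtained by deterministically selecting the rows in 𝓘_D and drawing s_R i.i.d. samples with replacement from 𝓘_R according to the renormalized leverage score probabilities p̃_i = l_i(A)/ξ (with rescaling 1/√(s_R p̃_i)). Fix ε_s, δ ∈ (0,1). If s_R ≥ 144 ξ log(2k/δ)/ε_s², then with probability at least 1 − δ, every singular value of S_H U_A satisfies 1 − ε_s ≤ σ_i²(S_H U_A) ≤ 1 + ε_s. -/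

import Mathlib

/-!
The proof is a moment method for the trace, in the style of exchangeable pairs, which avoids the
matrix exponential and the Golden–Thompson inequality.

Write `u_i` for the rows of `U`, `X_i = u_i u_iᵀ / p̃_i`, and `M = E X_i = ∑_{i ∉ 𝓘_D} u_i u_iᵀ`.
Then `(S_H U)ᵀ (S_H U) = 1 + Z`, where `Z = (1/s) ∑ⱼ (X_{ω j} - M)` is `dev X M ω`, so it suffices
to bound the quadratic form of `Z` by `ε_s`. Three facts are used: `X_i² = ξ X_i`, because
`‖u_i‖² = ξ p̃_i`; `M ≼ 1`, because `1 - M` is the Gram matrix of the deterministic rows; and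
`∑ⱼ X_{ω j} = s (Z + M)`.

Let `m_h = E tr Z^{2h}`. Expand `tr Z^{2h+2} = ∑ⱼ tr (1/s)(X_{ω j} - M) Z^{2h+1}` and resample the
`j`-th draw, which turns `Z` into `Z'` and `X_{ω j}` into an independent copy `X'`. By
exchangeability (`expect_swap`) the `j`-th term has the mean of
`½ tr (Z - Z')(Z^{2h+1} - Z'^{2h+1})`, and the trace mean value inequality (`trace_mean_value`)
bounds this by `(2h+1)/4 · tr (Z - Z')² (Z^{2h} + Z'^{2h})`. Since
`(X - X')² ≼ 2X² + 2X'² = 2ξ (X + X')`, summing over `j` gives a self-bounding recursion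
(`moment_step`)
`m_{h+1} ≤ (2h+1) ξ / s · (E tr Z^{2h+1} + 2 m_h) ≤ (2h+1) ξ / s · (½ m_{h+1} + (5/2) m_h)`.

For `h < P = ⌈log (2k/δ)⌉` the assumption on `s` makes the prefactor at most `ε_s²/36`, hence
`m_P ≤ k (ε_s²/3)^P` (`moment_bound`). A bad draw has `tr Z^{2P} ≥ ε_s^{2P}`, so Markov's inequality
bounds its probability by `k 3^{-P} ≤ k e^{-log (2k/δ)} = δ/2`.
-/

open Matrix

/-- Euclidean norm of a real vector. -/
noncomputable def vnorm {ι : Type*} [Fintype ι] (x : ι → ℝ) : ℝ :=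
  Real.sqrt (∑ i, x i ^ 2)

/-- The hybrid sampling matrix: the first `s_D` rows deterministically select the rows
`e j`, and the `s_R` random rows sample-and-rescale according to the draw `ω` with
probabilities `ptil`. -/
noncomputable def hybridMatrix {m sD sR : ℕ} (e : Fin sD → Fin m) (ptil : Fin m → ℝ)
    (ω : Fin sR → Fin m) : Matrix (Fin sD ⊕ Fin sR) (Fin m) ℝ :=
  Matrix.of (Sum.elim
    (fun j i => if i = e j then (1 : ℝ) else 0)
    (fun j i => if ω j = i then 1 / Real.sqrt ((sR : ℝ) * ptil i) else 0))

open Classical in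
/-- Probability of an event `E` of draws `ω : Fin sR → Fin m`, where the `s_R` draws are
i.i.d. with `P(draw = i) = ptil i`. -/
noncomputable def prob {m sR : ℕ} (ptil : Fin m → ℝ) (E : Set (Fin sR → Fin m)) : ℝ :=
  ∑ ω : Fin sR → Fin m, if ω ∈ E then ∏ j, ptil (ω j) else 0

/-! ### Trace inequalities for symmetric matrices -/

theorem exists_orth_diag {n : Type*} [Fintype n] [DecidableEq n] {A : Matrix n n ℝ}
    (hA : A.IsHermitian) :
    ∃ (P : Matrix n n ℝ) (a : n → ℝ), Pᵀ * P = 1 ∧ P * Pᵀ = 1 ∧ A = P * diagonal a * Pᵀ := by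
  have hs := hA.spectral_theorem
  have h1 := (Matrix.mem_unitaryGroup_iff').1 hA.eigenvectorUnitary.2
  have h2 := (Matrix.mem_unitaryGroup_iff).1 hA.eigenvectorUnitary.2
  refine ⟨(hA.eigenvectorUnitary : Matrix n n ℝ), hA.eigenvalues, ?_, ?_, ?_⟩
  · simpa [star_eq_conjTranspose, conjTranspose_eq_transpose_of_trivial] using h1
  · simpa [star_eq_conjTranspose, conjTranspose_eq_transpose_of_trivial] using h2
  · rw [Unitary.conjStarAlgAut_apply] at hs
    simpa [star_eq_conjTranspose, conjTranspose_eq_transpose_of_trivial, Function.comp_def] using hs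

theorem conj_diag_pow {n : Type*} [Fintype n] [DecidableEq n] {P : Matrix n n ℝ} {a : n → ℝ}
    (hP : Pᵀ * P = 1) (i : ℕ) (hP' : P * Pᵀ = 1) :
    (P * diagonal a * Pᵀ) ^ i = P * diagonal (fun r => a r ^ i) * Pᵀ := by
  induction i with
  | zero => simp [hP', diagonal_one]
  | succ i ih =>
    rw [pow_succ, ih]
    calc P * diagonal (fun r => a r ^ i) * Pᵀ * (P * diagonal a * Pᵀ)
        = P * diagonal (fun r => a r ^ i) * (Pᵀ * P) * diagonal a * Pᵀ := by
          simp only [Matrix.mul_assoc]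
      _ = _ := by
          rw [hP, Matrix.mul_one, Matrix.mul_assoc P, diagonal_mul_diagonal]
          simp only [pow_succ]

/-- Joint spectral representation: with eigenvalues `a`, `b` of `A`, `B` and
`w r s = ⟨u_r, v_s⟩²` for the eigenvectors, it reduces trace inequalities in two noncommuting
matrices to scalar ones. -/
theorem trace_pow_mul_pow {n : Type*} [Fintype n] [DecidableEq n] {A B : Matrix n n ℝ}
    (hA : A.IsHermitian) (hB : B.IsHermitian) :
    ∃ (a b : n → ℝ) (w : n → n → ℝ), (∀ r s, 0 ≤ w r s) ∧
      ∀ i j : ℕ, (A ^ i * B ^ j).trace = ∑ r, ∑ s, w r s * (a r ^ i * b s ^ j) := by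
  obtain ⟨P, a, hP, hP', rfl⟩ := exists_orth_diag hA
  obtain ⟨Q, b, hQ, hQ', rfl⟩ := exists_orth_diag hB
  refine ⟨a, b, fun r s => (Pᵀ * Q) r s ^ 2, fun r s => sq_nonneg _, fun i j => ?_⟩
  rw [conj_diag_pow hP i hP', conj_diag_pow hQ j hQ']
  have : (P * diagonal (fun r => a r ^ i) * Pᵀ * (Q * diagonal (fun r => b r ^ j) * Qᵀ)).trace
      = (diagonal (fun r => a r ^ i) * (Pᵀ * Q) * (diagonal (fun r => b r ^ j) * (Pᵀ * Q)ᵀ)).trace := by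
    rw [transpose_mul, transpose_transpose]
    calc _ = (P * (diagonal (fun r => a r ^ i) * Pᵀ * Q * diagonal (fun r => b r ^ j) * Qᵀ)).trace := by
          simp only [Matrix.mul_assoc]
      _ = _ := by rw [trace_mul_comm]; simp only [Matrix.mul_assoc]
  rw [this]
  simp only [trace, diag, Matrix.mul_apply (M := diagonal (fun r => a r ^ i) * (Pᵀ * Q)),
    diagonal_mul, transpose_apply]
  refine Finset.sum_congr rfl fun r _ => Finset.sum_congr rfl fun s _ => ?_
  ring

/-- Pairing the terms `i` and `2h - i` of the geometric sum, this is
`|a|^i |b|^j + |a|^j |b|^i ≤ |a|^{i+j} + |b|^{i+j}`. -/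
theorem scalar_mean_value (a b : ℝ) (h : ℕ) :
    (a - b) * (a ^ (2 * h + 1) - b ^ (2 * h + 1)) ≤
      ((2 * h + 1 : ℕ) : ℝ) / 2 * ((a - b) ^ 2 * (a ^ (2 * h) + b ^ (2 * h))) := by
  rw [← (Commute.all a b).mul_geom_sum₂]
  have hs : ∑ i ∈ Finset.range (2 * h + 1), a ^ i * b ^ (2 * h + 1 - 1 - i) ≤
      ((2 * h + 1 : ℕ) : ℝ) / 2 * (a ^ (2 * h) + b ^ (2 * h)) := by
    have hr := Finset.sum_range_reflect (fun i => a ^ i * b ^ (2 * h + 1 - 1 - i)) (2 * h + 1)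
    have hle : ∑ i ∈ Finset.range (2 * h + 1), (a ^ i * b ^ (2 * h + 1 - 1 - i)
        + a ^ (2 * h + 1 - 1 - i) * b ^ (2 * h + 1 - 1 - (2 * h + 1 - 1 - i))) ≤
        ∑ i ∈ Finset.range (2 * h + 1), (a ^ (2 * h) + b ^ (2 * h)) := by
      refine Finset.sum_le_sum fun i hi => ?_
      obtain ⟨j, hj⟩ : ∃ j, i + j = 2 * h := ⟨2 * h - i, by have := Finset.mem_range.1 hi; omega⟩
      have e1 : 2 * h + 1 - 1 - i = j := by omega
      have e2 : 2 * h + 1 - 1 - j = i := by omega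
      rw [e1, e2]
      have h1 : a ^ (2 * h) = |a| ^ i * |a| ^ j := by
        rw [← pow_add, hj, (even_two_mul h).pow_abs]
      have h2 : b ^ (2 * h) = |b| ^ i * |b| ^ j := by
        rw [← pow_add, hj, (even_two_mul h).pow_abs]
      have h3 : a ^ i * b ^ j ≤ |a| ^ i * |b| ^ j := by
        rw [← abs_pow, ← abs_pow, ← abs_mul]; exact le_abs_self _
      have h4 : a ^ j * b ^ i ≤ |a| ^ j * |b| ^ i := by
        rw [← abs_pow, ← abs_pow, ← abs_mul]; exact le_abs_self _
      have h5 : 0 ≤ (|a| ^ i - |b| ^ i) * (|a| ^ j - |b| ^ j) := by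
        rcases le_total |a| |b| with hab | hab
        · exact mul_nonneg_of_nonpos_of_nonpos
            (sub_nonpos.2 (pow_le_pow_left₀ (abs_nonneg _) hab _))
            (sub_nonpos.2 (pow_le_pow_left₀ (abs_nonneg _) hab _))
        · exact mul_nonneg
            (sub_nonneg.2 (pow_le_pow_left₀ (abs_nonneg _) hab _))
            (sub_nonneg.2 (pow_le_pow_left₀ (abs_nonneg _) hab _))
      rw [h1, h2]
      nlinarith
    rw [Finset.sum_add_distrib, hr, Finset.sum_const, Finset.card_range, nsmul_eq_mul] at hle
    linarith
  nlinarith [mul_le_mul_of_nonneg_left hs (sq_nonneg (a - b))]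

/-- Mean value trace inequality: the matrix version of `scalar_mean_value`. -/
theorem trace_mean_value {n : Type*} [Fintype n] [DecidableEq n] {A B : Matrix n n ℝ}
    (hA : A.IsHermitian) (hB : B.IsHermitian) (h : ℕ) :
    ((A - B) * (A ^ (2 * h + 1) - B ^ (2 * h + 1))).trace ≤
      ((2 * h + 1 : ℕ) : ℝ) / 2 *
        (((A - B) * (A - B) * A ^ (2 * h)).trace + ((A - B) * (A - B) * B ^ (2 * h)).trace) := by
  obtain ⟨a, b, w, hw, ht⟩ := trace_pow_mul_pow hA hB
  set n' := 2 * h with hn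
  have hL : ((A - B) * (A ^ (n' + 1) - B ^ (n' + 1))).trace =
      ∑ r, ∑ s, w r s * ((a r - b s) * (a r ^ (n' + 1) - b s ^ (n' + 1))) := by
    have e : ((A - B) * (A ^ (n' + 1) - B ^ (n' + 1))).trace =
        (A ^ (n' + 2) * B ^ 0).trace - (A ^ 1 * B ^ (n' + 1)).trace
          - (A ^ (n' + 1) * B ^ 1).trace + (A ^ 0 * B ^ (n' + 2)).trace := by
      rw [sub_mul, mul_sub, mul_sub]
      simp only [trace_sub, pow_zero, mul_one, one_mul, pow_one]
      rw [trace_mul_comm B (A ^ (n' + 1)), ← pow_succ', ← pow_succ']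
      ring
    rw [e]
    simp only [ht, ← Finset.sum_sub_distrib, ← Finset.sum_add_distrib]
    refine Finset.sum_congr rfl fun r _ => Finset.sum_congr rfl fun s _ => ?_
    ring
  have hR : (((A - B) * (A - B) * A ^ n').trace + ((A - B) * (A - B) * B ^ n').trace) =
      ∑ r, ∑ s, w r s * ((a r - b s) ^ 2 * (a r ^ n' + b s ^ n')) := by
    have e1 : ((A - B) * (A - B) * A ^ n').trace =
        (A ^ (n' + 2) * B ^ 0).trace - (A ^ (n' + 1) * B ^ 1).trace
          - (A ^ (n' + 1) * B ^ 1).trace + (A ^ n' * B ^ 2).trace := by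
      have x1 : (A * B * A ^ n').trace = (A ^ (n' + 1) * B).trace := by
        rw [trace_mul_comm, ← mul_assoc, pow_succ]
      have x2 : (B * A * A ^ n').trace = (A ^ (n' + 1) * B).trace := by
        rw [mul_assoc, trace_mul_comm, ← pow_succ']
      have x3 : (B * B * A ^ n').trace = (A ^ n' * B ^ 2).trace := by
        rw [trace_mul_comm, sq]
      have x4 : A * A * A ^ n' = A ^ (n' + 2) := by rw [pow_add, ← sq, ← pow_add, ← pow_add, add_comm]
      simp only [sub_mul, mul_sub, trace_sub, pow_zero, mul_one, pow_one, x1, x2, x3, x4]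
      ring
    have e2 : ((A - B) * (A - B) * B ^ n').trace =
        (A ^ 2 * B ^ n').trace - (A ^ 1 * B ^ (n' + 1)).trace
          - (A ^ 1 * B ^ (n' + 1)).trace + (A ^ 0 * B ^ (n' + 2)).trace := by
      have x1 : (A * B * B ^ n').trace = (A * B ^ (n' + 1)).trace := by
        rw [mul_assoc, ← pow_succ']
      have x2 : (B * A * B ^ n').trace = (A * B ^ (n' + 1)).trace := by
        rw [mul_assoc, trace_mul_comm, mul_assoc, ← pow_succ]
      have x4 : B * B * B ^ n' = B ^ (n' + 2) := by rw [pow_add, ← sq, ← pow_add, ← pow_add, add_comm]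
      have x3 : A * A = A ^ 2 := (sq A).symm
      simp only [sub_mul, mul_sub, trace_sub, pow_zero, one_mul, pow_one, x1, x2, x3, x4]
      ring
    rw [e1, e2]
    simp only [ht, ← Finset.sum_sub_distrib, ← Finset.sum_add_distrib]
    refine Finset.sum_congr rfl fun r _ => Finset.sum_congr rfl fun s _ => ?_
    ring
  rw [hL, hR, Finset.mul_sum]
  refine Finset.sum_le_sum fun r _ => ?_
  rw [Finset.mul_sum]
  refine Finset.sum_le_sum fun s _ => ?_
  have := mul_le_mul_of_nonneg_left (scalar_mean_value (a r) (b s) h) (hw r s)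
  rw [← hn] at this
  linarith

theorem trace_gram_mul_even_pow_nonneg {n l : Type*} [Fintype n] [DecidableEq n] [Fintype l]
    {Z : Matrix n n ℝ} (hZ : Z.IsHermitian) (W : Matrix l n ℝ) (h : ℕ) :
    0 ≤ (Wᵀ * W * Z ^ (2 * h)).trace := by
  have hs : (Z ^ h)ᵀ = Z ^ h := by
    have := (hZ.pow h).eq
    rwa [conjTranspose_eq_transpose_of_trivial] at this
  have e : (Wᵀ * W * Z ^ (2 * h)).trace = ((W * Z ^ h) * (W * Z ^ h)ᵀ).trace := by
    rw [transpose_mul, hs, two_mul, pow_add, ← Matrix.mul_assoc, trace_mul_comm,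
      trace_mul_comm (W * Z ^ h)]
    simp only [Matrix.mul_assoc]
  rw [e]
  simp only [trace, diag, Matrix.mul_apply (M := W * Z ^ h), transpose_apply]
  exact Finset.sum_nonneg fun i _ => Finset.sum_nonneg fun j _ => mul_self_nonneg _

theorem trace_even_pow_nonneg {n : Type*} [Fintype n] [DecidableEq n] {Z : Matrix n n ℝ}
    (hZ : Z.IsHermitian) (h : ℕ) : 0 ≤ (Z ^ (2 * h)).trace := by
  simpa using trace_gram_mul_even_pow_nonneg hZ (1 : Matrix n n ℝ) h

/-- If the quadratic form of `Z` exceeds `ε` in absolute value at some direction, then `Z` has an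
eigenvalue larger than `ε` in absolute value, and this eigenvalue alone makes `tr Z^{2P}` large. -/
theorem pow_le_trace_pow {n : Type*} [Fintype n] [DecidableEq n] {Z : Matrix n n ℝ}
    (hZ : Z.IsHermitian) (P : ℕ) {ε : ℝ} (hε : 0 ≤ ε) (x : n → ℝ)
    (hx : ε * (x ⬝ᵥ x) < |x ⬝ᵥ (Z *ᵥ x)|) : ε ^ (2 * P) ≤ (Z ^ (2 * P)).trace := by
  obtain ⟨Q, a, hQ, hQ', rfl⟩ := exists_orth_diag hZ
  rw [conj_diag_pow hQ _ hQ', trace_mul_comm, ← mul_assoc, hQ, one_mul, trace_diagonal]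
  set y := Qᵀ *ᵥ x with hy
  have hxx : x ⬝ᵥ x = ∑ r, y r ^ 2 := by
    have : y ⬝ᵥ y = x ⬝ᵥ x := by
      rw [hy, dotProduct_mulVec, vecMul_transpose, mulVec_mulVec, hQ', one_mulVec]
    rw [← this]; simp [dotProduct, sq]
  have hzz : x ⬝ᵥ ((Q * diagonal a * Qᵀ) *ᵥ x) = ∑ r, a r * y r ^ 2 := by
    rw [← mulVec_mulVec, ← mulVec_mulVec, dotProduct_mulVec, ← mulVec_transpose, ← hy]
    simp only [dotProduct, mulVec_diagonal]
    exact Finset.sum_congr rfl fun r _ => by ring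
  by_contra hlt
  push Not at hlt
  have hall : ∀ r, |a r| ≤ ε := fun r => by
    by_contra hr
    push Not at hr
    have h1 : ε ^ (2 * P) ≤ a r ^ (2 * P) := by
      rw [← (even_two_mul P).pow_abs (a r)]
      exact pow_le_pow_left₀ hε hr.le _
    have h2 : a r ^ (2 * P) ≤ ∑ r, a r ^ (2 * P) :=
      Finset.single_le_sum (f := fun r => a r ^ (2 * P))
        (fun i _ => (even_two_mul P).pow_nonneg _) (Finset.mem_univ r)
    linarith
  rw [hxx, hzz, Finset.mul_sum] at hx
  refine absurd hx (not_lt.2 ((Finset.abs_sum_le_sum_abs _ _).trans (Finset.sum_le_sum fun r _ => ?_)))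
  rw [abs_mul, abs_of_nonneg (sq_nonneg (y r))]
  exact mul_le_mul_of_nonneg_right (hall r) (sq_nonneg _)

/-! ### Expectation over i.i.d. draws -/

/-- Expectation of `f ω` when the `s` coordinates of `ω` are i.i.d. with weights `p`. -/
noncomputable def expect {ι : Type*} [Fintype ι] {s : ℕ} (p : ι → ℝ) (f : (Fin s → ι) → ℝ) : ℝ :=
  ∑ ω : Fin s → ι, (∏ j, p (ω j)) * f ω

section expect

variable {ι : Type*} [Fintype ι] {s : ℕ} {p : ι → ℝ}

theorem expect_mono (hp : ∀ i, 0 ≤ p i) {f g : (Fin s → ι) → ℝ} (h : ∀ ω, f ω ≤ g ω) :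
    expect p f ≤ expect p g :=
  Finset.sum_le_sum fun ω _ =>
    mul_le_mul_of_nonneg_left (h ω) (Finset.prod_nonneg fun j _ => hp (ω j))

theorem expect_add (f g : (Fin s → ι) → ℝ) :
    expect p (fun ω => f ω + g ω) = expect p f + expect p g := by
  simp only [expect, mul_add, Finset.sum_add_distrib]

theorem expect_const_mul (c : ℝ) (f : (Fin s → ι) → ℝ) :
    expect p (fun ω => c * f ω) = c * expect p f := by
  simp only [expect, Finset.mul_sum]
  exact Finset.sum_congr rfl fun ω _ => by ring

theorem expect_sum {κ : Type*} (t : Finset κ) (f : κ → (Fin s → ι) → ℝ) :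
    expect p (fun ω => ∑ a ∈ t, f a ω) = ∑ a ∈ t, expect p (f a) := by
  simp only [expect, Finset.mul_sum]
  exact Finset.sum_comm

theorem expect_const (hp1 : ∑ i, p i = 1) (c : ℝ) :
    expect p (fun _ : Fin s → ι => c) = c := by
  classical
  have h : ∏ _j : Fin s, ∑ i, p i = ∑ ω : Fin s → ι, ∏ j, p (ω j) := by
    rw [Finset.prod_univ_sum, Fintype.piFinset_univ]
  rw [expect, ← Finset.sum_mul, ← h, hp1]
  simp

/-- Exchangeability: if `i` is an independent copy of the draw `ω j`, then swapping `i` with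
`ω j` does not change the joint distribution of `(ω, i)`. -/
theorem expect_swap (j : Fin s) (G : (Fin s → ι) → ι → ℝ) :
    expect p (fun ω => ∑ i, p i * G ω i) =
      expect p (fun ω => ∑ i, p i * G (Function.update ω j i) (ω j)) := by
  classical
  simp only [expect, Finset.mul_sum]
  rw [← Fintype.sum_prod_type', ← Fintype.sum_prod_type']
  let σ : (Fin s → ι) × ι → (Fin s → ι) × ι := fun q => (Function.update q.1 j q.2, q.1 j)
  have hσ : Function.Involutive σ := fun q => by simp [σ]
  rw [← Equiv.sum_comp hσ.toPerm]
  refine Finset.sum_congr rfl fun q _ => ?_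
  obtain ⟨ω, i⟩ := q
  have hw : (∏ l, p (Function.update ω j i l)) * p (ω j) = (∏ l, p (ω l)) * p i := by
    rw [← Finset.mul_prod_erase Finset.univ (fun l => p (ω l)) (Finset.mem_univ j),
      ← Finset.mul_prod_erase Finset.univ (fun l => p (Function.update ω j i l))
        (Finset.mem_univ j)]
    have : ∏ l ∈ Finset.univ.erase j, p (Function.update ω j i l)
        = ∏ l ∈ Finset.univ.erase j, p (ω l) :=
      Finset.prod_congr rfl fun l hl => by
        rw [Function.update_of_ne (Finset.ne_of_mem_erase hl)]
    rw [this, Function.update_self]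
    ring
  simp only [Function.Involutive.coe_toPerm, σ]
  rw [← mul_assoc, hw, mul_assoc]

end expect

/-! ### Trace moments of the centred empirical mean -/

/-- The centred empirical mean `(1/s) ∑ⱼ (X (ω j) - M)`. -/
noncomputable def dev {ι n : Type*} {s : ℕ} (X : ι → Matrix n n ℝ) (M : Matrix n n ℝ)
    (ω : Fin s → ι) : Matrix n n ℝ :=
  ∑ j, ((s : ℝ)⁻¹) • (X (ω j) - M)

theorem dev_sub_update {ι n : Type*} {s : ℕ} (X : ι → Matrix n n ℝ) (M : Matrix n n ℝ)
    (ω : Fin s → ι) (j : Fin s) (i : ι) :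
    dev X M ω - dev X M (Function.update ω j i) = ((s : ℝ)⁻¹) • (X (ω j) - X i) := by
  rw [dev, dev, ← Finset.sum_sub_distrib, Finset.sum_eq_single j]
  · rw [Function.update_self, ← smul_sub]; congr 1; abel
  · intro l _ hl; rw [Function.update_of_ne hl, sub_self]
  · simp

theorem dev_isHermitian {ι n : Type*} {s : ℕ} {X : ι → Matrix n n ℝ} {M : Matrix n n ℝ}
    (hX : ∀ i, (X i).IsHermitian) (hM : M.IsHermitian) (ω : Fin s → ι) :
    (dev X M ω).IsHermitian := by
  simp only [IsHermitian, dev, conjTranspose_sum, conjTranspose_smul, conjTranspose_sub,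
    (hX _).eq, hM.eq, star_trivial]

/-- The contribution of the `j`-th draw to the moment of order `2h + 2`, estimated by replacing that
draw with an independent copy and using exchangeability. -/
theorem moment_step_single {ι n : Type*} [Fintype ι] [Fintype n] [DecidableEq n] {s : ℕ}
    {p : ι → ℝ} (hp : ∀ i, 0 ≤ p i) (hp1 : ∑ i, p i = 1)
    {X : ι → Matrix n n ℝ} {M : Matrix n n ℝ} {ξ : ℝ}
    (hX : ∀ i, (X i).IsHermitian) (hM : M.IsHermitian) (hXX : ∀ i, X i * X i = ξ • X i)
    (hmean : ∑ i, p i • X i = M) (h : ℕ) (j : Fin s) :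
    expect p (fun ω => (((s : ℝ)⁻¹ • (X (ω j) - M)) * dev X M ω ^ (2 * h + 1)).trace) ≤
      ((2 * h + 1 : ℕ) : ℝ) * ξ * (s : ℝ)⁻¹ ^ 2 *
        expect p (fun ω => (X (ω j) * dev X M ω ^ (2 * h)).trace
          + (M * dev X M ω ^ (2 * h)).trace) := by
  classical
  set c : ℝ := (s : ℝ)⁻¹ with hc
  have hH := fun ω : Fin s → ι => dev_isHermitian hX hM ω
  have hbar : ∀ (f : ι → Matrix n n ℝ) (R : Matrix n n ℝ),
      ∑ i, p i * (f i * R).trace = ((∑ i, p i • f i) * R).trace := by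
    intro f R
    simp only [Finset.sum_mul, trace_sum, smul_mul_assoc, trace_smul, smul_eq_mul]
  -- Subtracting an independent copy `X i` instead of the mean `M` leaves the average unchanged.
  have h1 : expect p (fun ω => ((c • (X (ω j) - M)) * dev X M ω ^ (2 * h + 1)).trace) =
      expect p (fun ω => ∑ i, p i * ((c • (X (ω j) - X i)) * dev X M ω ^ (2 * h + 1)).trace) := by
    congr 1
    funext ω
    rw [hbar]
    simp only [smul_comm _ c, ← Finset.smul_sum, smul_sub, Finset.sum_sub_distrib, hmean,
      ← Finset.sum_smul, hp1, one_smul]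
  set E := expect p
    (fun ω => ∑ i, p i * ((c • (X (ω j) - X i)) * dev X M ω ^ (2 * h + 1)).trace) with hE
  have h2 : E = expect p (fun ω => ∑ i, p i * ((c • (X i - X (ω j))) *
      dev X M (Function.update ω j i) ^ (2 * h + 1)).trace) := by
    rw [hE, expect_swap j]
    simp only [Function.update_self]
  set F := expect p (fun ω => ∑ i, p i *
    ((c • (X (ω j) - X i)) * (c • (X (ω j) - X i)) * dev X M ω ^ (2 * h)).trace) with hF
  have h3 : F = expect p (fun ω => ∑ i, p i * ((c • (X i - X (ω j))) * (c • (X i - X (ω j))) *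
      dev X M (Function.update ω j i) ^ (2 * h)).trace) := by
    rw [hF, expect_swap j]
    simp only [Function.update_self]
  have h4 : E + E ≤ ((2 * h + 1 : ℕ) : ℝ) / 2 * (F + F) := by
    nth_rewrite 2 [h2]
    nth_rewrite 2 [h3]
    rw [hE, hF, ← expect_add, ← expect_add, ← expect_const_mul]
    refine expect_mono hp fun ω => ?_
    rw [← Finset.sum_add_distrib, ← Finset.sum_add_distrib, Finset.mul_sum]
    refine Finset.sum_le_sum fun i _ => ?_
    have key := trace_mean_value (hH ω) (hH (Function.update ω j i)) h
    rw [dev_sub_update, ← hc] at key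
    have hneg : c • (X i - X (ω j)) = -(c • (X (ω j) - X i)) := by
      rw [← smul_neg, neg_sub]
    rw [hneg, neg_mul_neg, neg_mul, trace_neg]
    rw [mul_sub, trace_sub] at key
    have := mul_le_mul_of_nonneg_left key (hp i)
    linarith
  have h5 : F ≤ 2 * ξ * c ^ 2 * expect p (fun ω => (X (ω j) * dev X M ω ^ (2 * h)).trace
          + (M * dev X M ω ^ (2 * h)).trace) := by
    rw [hF, ← expect_const_mul]
    refine expect_mono hp fun ω => ?_
    have hMi : (X (ω j) * dev X M ω ^ (2 * h)).trace + (M * dev X M ω ^ (2 * h)).trace =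
        ∑ i, p i * ((X (ω j) + X i) * dev X M ω ^ (2 * h)).trace := by
      rw [hbar]
      simp only [smul_add, Finset.sum_add_distrib, hmean, ← Finset.sum_smul, hp1, one_smul,
        add_mul, trace_add]
    rw [hMi, Finset.mul_sum]
    refine Finset.sum_le_sum fun i _ => ?_
    -- `(X - X')² = 2X² + 2X'² - (X + X')²`, and the last square contributes nonnegatively.
    have hpos := trace_gram_mul_even_pow_nonneg (hH ω) (X (ω j) + X i) h
    have hsym : (X (ω j) + X i)ᵀ = X (ω j) + X i := by
      have := ((hX (ω j)).add (hX i)).eq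
      rwa [conjTranspose_eq_transpose_of_trivial] at this
    rw [hsym] at hpos
    have hid : (X (ω j) - X i) * (X (ω j) - X i) =
        (2 * ξ) • (X (ω j) + X i) - (X (ω j) + X i) * (X (ω j) + X i) := by
      have e1 := hXX (ω j)
      have e2 := hXX i
      simp only [sub_mul, mul_sub, add_mul, mul_add, e1, e2]
      module
    have hle : ((X (ω j) - X i) * (X (ω j) - X i) * dev X M ω ^ (2 * h)).trace ≤
        2 * ξ * ((X (ω j) + X i) * dev X M ω ^ (2 * h)).trace := by
      rw [hid, sub_mul, trace_sub, smul_mul_assoc, trace_smul, smul_eq_mul]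
      linarith
    have hcc : ((c • (X (ω j) - X i)) * (c • (X (ω j) - X i)) * dev X M ω ^ (2 * h)).trace =
        c ^ 2 * ((X (ω j) - X i) * (X (ω j) - X i) * dev X M ω ^ (2 * h)).trace := by
      rw [smul_mul_smul_comm, smul_mul_assoc, trace_smul, smul_eq_mul, sq]
    rw [hcc]
    have := mul_le_mul_of_nonneg_left hle (mul_nonneg (hp i) (sq_nonneg c))
    linarith
  rw [h1]
  have h6 : (0 : ℝ) ≤ ((2 * h + 1 : ℕ) : ℝ) / 2 := by positivity
  have := mul_le_mul_of_nonneg_left h5 h6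
  linarith

/-- Recursion for the even trace moments of the centred empirical mean. The moment of order `2h + 2`
reappears on the right because `∑ⱼ X (ω j) = s (Z + M)`; it can be absorbed once the prefactor is
small. The hypothesis `hW` encodes `M ≼ 1`. -/
theorem moment_step {ι n l : Type*} [Fintype ι] [Fintype n] [DecidableEq n] [Fintype l] {s : ℕ}
    (hs : 0 < s)
    {p : ι → ℝ} (hp : ∀ i, 0 ≤ p i) (hp1 : ∑ i, p i = 1)
    {X : ι → Matrix n n ℝ} {M : Matrix n n ℝ} {ξ : ℝ} (hξ : 0 ≤ ξ)
    (hX : ∀ i, (X i).IsHermitian) (hM : M.IsHermitian) (hXX : ∀ i, X i * X i = ξ • X i)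
    (hmean : ∑ i, p i • X i = M) (W : Matrix l n ℝ) (hW : M + Wᵀ * W = 1) (h : ℕ) :
    expect p (fun ω : Fin s → ι => (dev X M ω ^ (2 * (h + 1))).trace) ≤
      ((2 * h + 1 : ℕ) : ℝ) * ξ / s *
        (1 / 2 * expect p (fun ω : Fin s → ι => (dev X M ω ^ (2 * (h + 1))).trace)
          + 5 / 2 * expect p (fun ω : Fin s → ι => (dev X M ω ^ (2 * h)).trace)) := by
  have hs' : (0 : ℝ) < s := by exact_mod_cast hs
  have h1 : expect p (fun ω : Fin s → ι => (dev X M ω ^ (2 * (h + 1))).trace) =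
      ∑ j, expect p (fun ω : Fin s → ι =>
        (((s : ℝ)⁻¹ • (X (ω j) - M)) * dev X M ω ^ (2 * h + 1)).trace) := by
    rw [← expect_sum]
    congr 1
    funext ω
    rw [← trace_sum, ← Finset.sum_mul]
    congr 1
    exact pow_succ' (dev X M ω) (2 * h + 1)
  have h2 := Finset.sum_le_sum fun j (_ : j ∈ Finset.univ) =>
    moment_step_single (s := s) hp hp1 hX hM hXX hmean h j
  rw [← h1, ← Finset.mul_sum, ← expect_sum] at h2
  have h3 : expect p (fun ω : Fin s → ι => ∑ j, ((X (ω j) * dev X M ω ^ (2 * h)).trace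
          + (M * dev X M ω ^ (2 * h)).trace)) ≤
      expect p (fun ω : Fin s → ι => s * (1 / 2 * (dev X M ω ^ (2 * (h + 1))).trace
          + 5 / 2 * (dev X M ω ^ (2 * h)).trace)) := by
    refine expect_mono hp fun ω => ?_
    set Z := dev X M ω with hZ
    have hH : Z.IsHermitian := dev_isHermitian hX hM ω
    have hsum : ∑ j, X (ω j) = (s : ℝ) • (Z + M) := by
      rw [hZ, dev, ← Finset.smul_sum, smul_add, smul_inv_smul₀ hs'.ne', Finset.sum_sub_distrib,
        Finset.sum_const, Finset.card_univ, Fintype.card_fin, ← Nat.cast_smul_eq_nsmul ℝ]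
      abel
    rw [Finset.sum_add_distrib, ← trace_sum, ← Finset.sum_mul, hsum, Finset.sum_const,
      Finset.card_univ, Fintype.card_fin, nsmul_eq_mul, smul_mul_assoc, trace_smul, smul_eq_mul,
      ← mul_add]
    refine mul_le_mul_of_nonneg_left ?_ hs'.le
    have hMle : (M * Z ^ (2 * h)).trace ≤ (Z ^ (2 * h)).trace := by
      have h0 := trace_gram_mul_even_pow_nonneg hH W h
      have h0' : ((M + Wᵀ * W) * Z ^ (2 * h)).trace = (Z ^ (2 * h)).trace := by rw [hW, one_mul]
      rw [add_mul, trace_add] at h0'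
      linarith
    -- The odd moment is absorbed by the neighbouring even ones: `2z ≤ z² + 1`.
    have hodd : (Z * Z ^ (2 * h)).trace ≤
        1 / 2 * (Z ^ (2 * (h + 1))).trace + 1 / 2 * (Z ^ (2 * h)).trace := by
      have h0 := trace_gram_mul_even_pow_nonneg hH (Z - 1) h
      have hsym : (Z - 1)ᵀ = Z - 1 := by
        have := (hH.sub isHermitian_one).eq
        rwa [conjTranspose_eq_transpose_of_trivial] at this
      have e : (Z - 1) * (Z - 1) * Z ^ (2 * h) =
          Z ^ (2 * (h + 1)) - (2 : ℝ) • (Z * Z ^ (2 * h)) + Z ^ (2 * h) := by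
        have e2 : Z ^ (2 * (h + 1)) = Z * Z * Z ^ (2 * h) := by
          rw [mul_add, mul_one, add_comm, pow_add, sq]
        rw [e2]
        simp only [sub_mul, mul_sub, one_mul, mul_one, two_smul]
        abel
      rw [hsym, e, trace_add, trace_sub, trace_smul, smul_eq_mul] at h0
      linarith
    rw [add_mul, trace_add]
    linarith
  rw [expect_const_mul, expect_add, expect_const_mul, expect_const_mul] at h3
  refine h2.trans ((mul_le_mul_of_nonneg_left h3 (by positivity)).trans (le_of_eq ?_))
  field_simp

/-- Trace moment bound obtained by iterating `moment_step`. The hypothesis `hP` says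
`(2P - 1) ξ / s ≤ ε² / 36`; any factor at most `ε² / e` per step would do, and `ε² / 3` is a
convenient one. -/
theorem moment_bound {ι n l : Type*} [Fintype ι] [Fintype n] [DecidableEq n] [Fintype l] {s : ℕ}
    (hs : 0 < s)
    {p : ι → ℝ} (hp : ∀ i, 0 ≤ p i) (hp1 : ∑ i, p i = 1)
    {X : ι → Matrix n n ℝ} {M : Matrix n n ℝ} {ξ : ℝ} (hξ : 0 ≤ ξ)
    (hX : ∀ i, (X i).IsHermitian) (hM : M.IsHermitian) (hXX : ∀ i, X i * X i = ξ • X i)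
    (hmean : ∑ i, p i • X i = M) (W : Matrix l n ℝ) (hW : M + Wᵀ * W = 1)
    {ε : ℝ} (hε0 : 0 < ε) (hε1 : ε < 1) (P : ℕ)
    (hP : (2 * P : ℝ) * ξ / s ≤ ε ^ 2 / 36 + ξ / s) (h : ℕ) (hhP : h ≤ P) :
    expect p (fun ω : Fin s → ι => (dev X M ω ^ (2 * h)).trace) ≤
      (ε ^ 2 / 3) ^ h * Fintype.card n := by
  have hs' : (0 : ℝ) < s := by exact_mod_cast hs
  induction h with
  | zero => simp [expect_const hp1]
  | succ h ih =>
    have ih := ih (by omega)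
    have hstep := moment_step hs hp hp1 hξ hX hM hXX hmean W hW h
    have hnonneg : ∀ h, 0 ≤ expect p (fun ω : Fin s → ι => (dev X M ω ^ (2 * h)).trace) := by
      intro h
      rw [← expect_const (s := s) hp1 0]
      refine expect_mono hp fun ω => ?_
      exact trace_even_pow_nonneg (dev_isHermitian hX hM ω) h
    set m1 := expect p (fun ω : Fin s → ι => (dev X M ω ^ (2 * (h + 1))).trace)
    set m0 := expect p (fun ω : Fin s → ι => (dev X M ω ^ (2 * h)).trace)
    have hm1 : 0 ≤ m1 := hnonneg _
    have hm0 : 0 ≤ m0 := hnonneg _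
    have ha : ((2 * h + 1 : ℕ) : ℝ) * ξ / s ≤ ε ^ 2 / 36 := by
      have hle : ((2 * h + 1 : ℕ) : ℝ) ≤ 2 * P - 1 := by
        have : ((2 * h + 1 + 1 : ℕ) : ℝ) ≤ ((2 * P : ℕ) : ℝ) := by
          exact_mod_cast (by omega : 2 * h + 1 + 1 ≤ 2 * P)
        push_cast at this ⊢
        linarith
      have := div_le_div_of_nonneg_right (mul_le_mul_of_nonneg_right hle hξ) hs'.le
      have e : (2 * (P : ℝ) - 1) * ξ / s = 2 * P * ξ / s - ξ / s := by ring
      linarith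
    have hb := hstep.trans (mul_le_mul_of_nonneg_right ha (by positivity))
    have hε2 : ε ^ 2 ≤ 1 := by nlinarith
    have hm : m1 ≤ ε ^ 2 / 3 * m0 := by
      have := mul_le_mul_of_nonneg_right hε2 hm1
      have := mul_nonneg (sq_nonneg ε) hm0
      nlinarith
    calc m1 ≤ ε ^ 2 / 3 * m0 := hm
      _ ≤ ε ^ 2 / 3 * ((ε ^ 2 / 3) ^ h * Fintype.card n) :=
          mul_le_mul_of_nonneg_left ih (by positivity)
      _ = _ := by ring

/-! ### The hybrid sampling matrix -/

theorem vnorm_sq {ι : Type*} [Fintype ι] (x : ι → ℝ) : vnorm x ^ 2 = ∑ i, x i ^ 2 := by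
  rw [vnorm, Real.sq_sqrt (Finset.sum_nonneg fun i _ => sq_nonneg _)]

/-- The random rows contribute `0` when `p (ω j) = 0`, both in `hybridMatrix` and in the inverse on
the right. -/
theorem vnorm_hybrid_sq {m k sD sR : ℕ} (U : Matrix (Fin m) (Fin k) ℝ) {ID : Finset (Fin m)}
    (hID : ID.card = sD) {e : Fin sD → Fin m} (he : Function.Injective e)
    (heID : ∀ j, e j ∈ ID) {p : Fin m → ℝ} (hp : ∀ i, 0 ≤ p i) (ω : Fin sR → Fin m)
    (x : Fin k → ℝ) :
    vnorm ((hybridMatrix e p ω * U).mulVec x) ^ 2 =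
      ∑ i ∈ ID, (U *ᵥ x) i ^ 2 + ∑ j, (sR : ℝ)⁻¹ * ((p (ω j))⁻¹ * (U *ᵥ x) (ω j) ^ 2) := by
  rw [vnorm_sq, ← mulVec_mulVec, Fintype.sum_sum_type]
  congr 1
  · have himg : Finset.univ.image e = ID := by
      apply Finset.eq_of_subset_of_card_le
      · intro i hi
        obtain ⟨j, -, rfl⟩ := Finset.mem_image.1 hi
        exact heID j
      · rw [Finset.card_image_of_injective _ he, hID, Finset.card_univ, Fintype.card_fin]
    rw [← himg, Finset.sum_image (fun a _ b _ hab => he hab)]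
    refine Finset.sum_congr rfl fun j _ => ?_
    congr 1
    simp [hybridMatrix, mulVec, dotProduct]
  · refine Finset.sum_congr rfl fun j _ => ?_
    have : (hybridMatrix e p ω *ᵥ (U *ᵥ x)) (Sum.inr j) =
        1 / Real.sqrt ((sR : ℝ) * p (ω j)) * (U *ᵥ x) (ω j) := by
      rw [mulVec, dotProduct]
      simp [hybridMatrix, ite_mul]
    rw [this, mul_pow, div_pow, Real.sq_sqrt (mul_nonneg (Nat.cast_nonneg _) (hp _)), one_pow,
      one_div, mul_inv, mul_assoc]

theorem dotProduct_vecMulVec_self {k : ℕ} (u x : Fin k → ℝ) :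
    x ⬝ᵥ (vecMulVec u u *ᵥ x) = (u ⬝ᵥ x) ^ 2 := by
  rw [vecMulVec_mulVec, op_smul_eq_smul, dotProduct_smul, smul_eq_mul, dotProduct_comm x u, sq]

/-- Markov's inequality for the complement of `G`. -/
theorem one_sub_prob_le {m sR : ℕ} {p : Fin m → ℝ} (hp : ∀ i, 0 ≤ p i) (hp1 : ∑ i, p i = 1)
    (G : Set (Fin sR → Fin m)) {c : ℝ} (hc : 0 < c) (f : (Fin sR → Fin m) → ℝ)
    (hf : ∀ ω, 0 ≤ f ω) (hG : ∀ ω, ω ∉ G → c ≤ f ω) :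
    1 - prob p G ≤ c⁻¹ * expect p f := by
  classical
  have h1 : prob p G = expect p (fun ω => if ω ∈ G then 1 else 0) := by
    simp only [prob, expect, mul_ite, mul_one, mul_zero]
  have h2 : expect p (fun _ : Fin sR → Fin m => 1) ≤
      expect p (fun ω => c⁻¹ * f ω + if ω ∈ G then 1 else 0) := by
    refine expect_mono hp fun ω => ?_
    split_ifs with hω
    · have := mul_nonneg (inv_nonneg.2 hc.le) (hf ω)
      linarith
    · have := mul_le_mul_of_nonneg_left (hG ω hω) (inv_nonneg.2 hc.le)
      rw [inv_mul_cancel₀ hc.ne'] at this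
      linarith
  rw [expect_const hp1, expect_add, expect_const_mul, ← h1] at h2
  linarith

/-- first structural condition for hybrid leverage score sampling.
With leverage scores `l_i(A) = ‖U_A[i,:]‖₂²`, deterministic index set `𝓘_D` of size
`s_D`, `θ = Σ_{i∈𝓘_D} l_i(A)`, `ξ = k − θ`, and `s_R ≥ 144 ξ log(2k/δ)/ε_s²`, with
probability at least `1 − δ` every singular value of `S_H U_A` satisfies
`1 − ε_s ≤ σ_i²(S_H U_A) ≤ 1 + ε_s` (expressed via the quadratic form of the Gram
matrix: `(1−ε_s)‖x‖² ≤ ‖S_H U_A x‖² ≤ (1+ε_s)‖x‖²` for all `x`). -/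
theorem stmt6 {m k sD sR : ℕ}
    (A U : Matrix (Fin m) (Fin k) ℝ) (Sig V : Matrix (Fin k) (Fin k) ℝ)
    (hrank : A.rank = k)
    (hU : Uᵀ * U = (1 : Matrix (Fin k) (Fin k) ℝ))
    (hSigDiag : ∀ i j, i ≠ j → Sig i j = 0) (hSigPos : ∀ i, 0 < Sig i i)
    (hV : Vᵀ * V = (1 : Matrix (Fin k) (Fin k) ℝ))
    (hSVD : A = U * Sig * Vᵀ)
    (ID : Finset (Fin m)) (hID : ID.card = sD)
    (e : Fin sD → Fin m) (he : Function.Injective e) (heID : ∀ j, e j ∈ ID)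
    (θ ξ : ℝ) (hθ : θ = ∑ i ∈ ID, ∑ j, U i j ^ 2) (hξ : ξ = (k : ℝ) - θ) (hξpos : 0 < ξ)
    (ptil : Fin m → ℝ)
    (hptil : ∀ i, ptil i = if i ∈ ID then 0 else (∑ j, U i j ^ 2) / ξ)
    (εs δ : ℝ) (hεs : εs ∈ Set.Ioo (0 : ℝ) 1) (hδ : δ ∈ Set.Ioo (0 : ℝ) 1)
    (hsR : (sR : ℝ) ≥ 144 * ξ * Real.log (2 * (k : ℝ) / δ) / εs ^ 2) :
    prob ptil {ω : Fin sR → Fin m |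
        ∀ x : Fin k → ℝ,
          (1 - εs) * vnorm x ^ 2 ≤ vnorm ((hybridMatrix e ptil ω * U).mulVec x) ^ 2
          ∧ vnorm ((hybridMatrix e ptil ω * U).mulVec x) ^ 2 ≤ (1 + εs) * vnorm x ^ 2}
      ≥ 1 - δ := by
  obtain ⟨hε0, hε1⟩ := hεs
  obtain ⟨hδ0, hδ1⟩ := hδ
  set l : Fin m → ℝ := fun i => ∑ j, U i j ^ 2 with hl
  have hl0 : ∀ i, 0 ≤ l i := fun i => Finset.sum_nonneg fun j _ => sq_nonneg _
  have hUab : ∀ a b, ∑ i, U i a * U i b = (1 : Matrix (Fin k) (Fin k) ℝ) a b := fun a b => by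
    rw [← hU]; simp [Matrix.mul_apply]
  have hlsum : ∑ i, l i = k := by
    rw [hl, Finset.sum_comm]
    simp [sq, hUab]
  have hk : 0 < k := by
    rcases Nat.eq_zero_or_pos k with rfl | hk
    · have hθ : θ = 0 := by rw [hθ]; simp [hl]
      rw [hξ, hθ] at hξpos
      simp at hξpos
    · exact hk
  have hp : ∀ i, 0 ≤ ptil i := fun i => by
    rw [hptil]; split_ifs
    · exact le_rfl
    · exact div_nonneg (hl0 i) hξpos.le
  have hp1 : ∑ i, ptil i = 1 := by
    have h1 : ∑ i, ptil i = (∑ i, (l i - if i ∈ ID then l i else 0)) / ξ := by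
      rw [Finset.sum_div]
      refine Finset.sum_congr rfl fun i _ => ?_
      rw [hptil]
      split_ifs <;> simp [hl]
    rw [h1, Finset.sum_sub_distrib, hlsum, Finset.sum_ite_mem, Finset.univ_inter, ← hθ, ← hξ,
      div_self (ne_of_gt hξpos)]
  -- The random rank-one summands; `(ptil i)⁻¹ = 0` when `ptil i = 0`.
  set X : Fin m → Matrix (Fin k) (Fin k) ℝ := fun i => (ptil i)⁻¹ • vecMulVec (U i) (U i) with hX
  set M : Matrix (Fin k) (Fin k) ℝ := ∑ i, ptil i • X i with hM
  set W : Matrix (Fin m) (Fin k) ℝ := Matrix.of fun i j => if i ∈ ID then U i j else 0 with hW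
  have hrow0 : ∀ i, i ∉ ID → ptil i = 0 → ∀ j, U i j = 0 := by
    intro i hi h0 j
    rw [hptil, if_neg hi, div_eq_zero_iff, or_iff_left hξpos.ne',
      Finset.sum_eq_zero_iff_of_nonneg fun j _ => sq_nonneg _] at h0
    exact pow_eq_zero_iff two_ne_zero |>.1 (h0 j (Finset.mem_univ j))
  have hXH : ∀ i, (X i).IsHermitian := fun i => by
    ext a b
    simp [hX, vecMulVec_apply, mul_comm]
  have hMH : M.IsHermitian := by
    simp only [IsHermitian, hM, conjTranspose_sum, conjTranspose_smul, (hXH _).eq, star_trivial]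
  have hXX : ∀ i, X i * X i = ξ • X i := fun i => by
    have hvv : vecMulVec (U i) (U i) * vecMulVec (U i) (U i) = l i • vecMulVec (U i) (U i) := by
      ext a b
      simp only [Matrix.mul_apply, vecMulVec_apply, Matrix.smul_apply, smul_eq_mul, hl,
        Finset.sum_mul]
      exact Finset.sum_congr rfl fun j _ => by ring
    simp only [hX]
    rw [smul_mul_smul_comm, hvv, smul_smul, smul_smul]
    by_cases h0 : ptil i = 0
    · simp [h0]
    · congr 1
      have hiD : i ∉ ID := fun h => h0 (by rw [hptil, if_pos h])
      have hli : l i = ptil i * ξ := by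
        rw [hptil, if_neg hiD, div_mul_cancel₀ _ hξpos.ne']
      rw [hli]
      field_simp
  have hMW : M + Wᵀ * W = 1 := by
    ext a b
    rw [← hUab a b]
    simp only [hM, hX, hW, Matrix.add_apply, Matrix.sum_apply, Matrix.mul_apply,
      Matrix.smul_apply, vecMulVec_apply, transpose_apply, of_apply, smul_eq_mul]
    rw [← Finset.sum_add_distrib]
    refine Finset.sum_congr rfl fun i _ => ?_
    by_cases hi : i ∈ ID
    · simp [hi, hptil i]
    · by_cases h0 : ptil i = 0
      · simp [hi, hrow0 i hi h0]
      · simp [hi, mul_inv_cancel_left₀ h0]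
  -- Parameters: `L = log (2k/δ)` and the moment order `2P` with `L ≤ P < L + 1`.
  set L := Real.log (2 * (k : ℝ) / δ) with hL
  have hk1 : (1 : ℝ) ≤ k := by exact_mod_cast hk
  have hLhalf : 1 / 2 ≤ L := by
    have h2 : (2 : ℝ) ≤ 2 * k / δ := by
      rw [le_div_iff₀ hδ0]; nlinarith
    have := Real.log_le_log two_pos h2
    have := Real.log_two_gt_d9
    linarith
  have hsRpos : (0 : ℝ) < sR := lt_of_lt_of_le (by positivity) hsR
  have hs : 0 < sR := by exact_mod_cast hsRpos
  set P := ⌈L⌉₊ with hPdef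
  have hPL : L ≤ P := Nat.le_ceil L
  have hPL' : (P : ℝ) < L + 1 := Nat.ceil_lt_add_one (by linarith)
  have hPbound : (2 * P : ℝ) * ξ / sR ≤ εs ^ 2 / 36 + ξ / sR := by
    have h1 : 144 * ξ * L ≤ sR * εs ^ 2 := by
      rwa [ge_iff_le, div_le_iff₀ (by positivity)] at hsR
    have h2 : (2 * P : ℝ) * ξ / sR - ξ / sR = (2 * P - 1) * ξ / sR := by ring
    have h3 : (2 * P - 1 : ℝ) * ξ / sR ≤ εs ^ 2 / 36 := by
      rw [div_le_iff₀ hsRpos]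
      have : (2 * P - 1 : ℝ) * ξ ≤ 4 * L * ξ :=
        mul_le_mul_of_nonneg_right (by linarith) hξpos.le
      linarith
    linarith
  have hmom := moment_bound hs hp hp1 hξpos.le hXH hMH hXX rfl W hMW hε0 hε1 P hPbound P le_rfl
  -- `(S_H U)ᵀ (S_H U) = 1 + dev X M ω`, as an identity of quadratic forms.
  have hquad : ∀ (ω : Fin sR → Fin m) (x : Fin k → ℝ),
      vnorm ((hybridMatrix e ptil ω * U).mulVec x) ^ 2 =
        vnorm x ^ 2 + x ⬝ᵥ (dev X M ω *ᵥ x) := by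
    intro ω x
    rw [vnorm_hybrid_sq U hID he heID hp, vnorm_sq]
    have hxx : ∑ i, x i ^ 2 = x ⬝ᵥ (M *ᵥ x) + ∑ i ∈ ID, (U *ᵥ x) i ^ 2 := by
      have h1 : x ⬝ᵥ ((Wᵀ * W) *ᵥ x) = ∑ i ∈ ID, (U *ᵥ x) i ^ 2 := by
        rw [← mulVec_mulVec, dotProduct_mulVec, vecMul_transpose, dotProduct,
          ← Finset.sum_subset (Finset.subset_univ ID)]
        · refine Finset.sum_congr rfl fun i hi => ?_
          simp [hW, mulVec, dotProduct, hi, sq]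
        · intro i _ hi
          simp [hW, mulVec, dotProduct, hi]
      rw [← h1, ← dotProduct_add, ← add_mulVec, hMW, one_mulVec]
      simp [dotProduct, sq]
    have hdev : x ⬝ᵥ (dev X M ω *ᵥ x) =
        ∑ j, (sR : ℝ)⁻¹ * ((ptil (ω j))⁻¹ * (U *ᵥ x) (ω j) ^ 2) - x ⬝ᵥ (M *ᵥ x) := by
      have h1 : ∀ i, x ⬝ᵥ (X i *ᵥ x) = (ptil i)⁻¹ * (U *ᵥ x) i ^ 2 := fun i => by
        simp only [hX]
        rw [smul_mulVec, dotProduct_smul, dotProduct_vecMulVec_self, smul_eq_mul]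
        rfl
      have h2 : ∑ _j : Fin sR, (sR : ℝ)⁻¹ * (x ⬝ᵥ (M *ᵥ x)) = x ⬝ᵥ (M *ᵥ x) := by
        rw [Finset.sum_const, Finset.card_univ, Fintype.card_fin, nsmul_eq_mul,
          mul_inv_cancel_left₀ hsRpos.ne']
      rw [dev, sum_mulVec, dotProduct_sum, ← h2, ← Finset.sum_sub_distrib]
      refine Finset.sum_congr rfl fun j _ => ?_
      rw [smul_mulVec, dotProduct_smul, sub_mulVec, dotProduct_sub, h1, smul_eq_mul, mul_sub]
    rw [hxx, hdev]
    ring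
  set G : Set (Fin sR → Fin m) := {ω | ∀ x : Fin k → ℝ,
    (1 - εs) * vnorm x ^ 2 ≤ vnorm ((hybridMatrix e ptil ω * U).mulVec x) ^ 2
      ∧ vnorm ((hybridMatrix e ptil ω * U).mulVec x) ^ 2 ≤ (1 + εs) * vnorm x ^ 2} with hG
  have hbad : ∀ ω, ω ∉ G → εs ^ (2 * P) ≤ (dev X M ω ^ (2 * P)).trace := by
    intro ω hω
    simp only [hG, Set.mem_ofPred_eq, not_forall] at hω
    obtain ⟨x, hx⟩ := hω
    refine pow_le_trace_pow (dev_isHermitian hXH hMH ω) P hε0.le x ?_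
    by_contra hle
    apply hx
    have hxx : x ⬝ᵥ x = vnorm x ^ 2 := by rw [vnorm_sq]; simp [dotProduct, sq]
    rw [not_lt, hxx, abs_le] at hle
    rw [hquad]
    constructor <;> linarith [hle.1, hle.2]
  have hεP : 0 < εs ^ (2 * P) := by positivity
  have hmarkov := one_sub_prob_le hp hp1 G hεP
    (fun ω : Fin sR → Fin m => (dev X M ω ^ (2 * P)).trace)
    (fun ω => trace_even_pow_nonneg (dev_isHermitian hXH hMH ω) P) hbad
  have hfinal : (εs ^ (2 * P))⁻¹ * ((εs ^ 2 / 3) ^ P * Fintype.card (Fin k)) ≤ δ := by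
    have h1 : (εs ^ (2 * P))⁻¹ * ((εs ^ 2 / 3) ^ P * Fintype.card (Fin k)) = (3 ^ P)⁻¹ * k := by
      rw [Fintype.card_fin, div_pow, ← pow_mul]
      field_simp
    have h2 : 2 * k / δ ≤ (3 : ℝ) ^ P := by
      calc 2 * k / δ = Real.exp L := (Real.exp_log (by positivity)).symm
        _ ≤ Real.exp P := Real.exp_le_exp.2 hPL
        _ = Real.exp 1 ^ P := by rw [← Real.exp_nat_mul, mul_one]
        _ ≤ 3 ^ P := pow_le_pow_left₀ (Real.exp_pos 1).le (by
            have := Real.exp_one_lt_d9; linarith) P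
    rw [h1, inv_mul_le_iff₀ (by positivity)]
    rw [div_le_iff₀ hδ0] at h2
    linarith
  have := mul_le_mul_of_nonneg_left hmom (inv_nonneg.2 hεP.le)
  linarith
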